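/- arXiv:1408.6176 — 8 statements merged into one kernel-verified Lean document; each statement's English description precedes it below -/
import Mathlib

section
/- Let P be the tropical polytope generated by v^1,…,v^p ∈ ℝ^n. For every x ∈ P and every i ∈ {1,…,n}, there exists an extreme point v of P of type i such that v ∈ S(x,i). -/
section Defs
variable {α : Type*} [LinearOrder α] [AddCommGroup α]

/-- The sector `S(a,i) = {x | x_j - a_j ≤ x_i - a_i for all j}`. -/
def sector {n : ℕ} (a : Fin n → α) (i : Fin n) : Set (Fin n → α) :=
  {x | ∀ j, x j - a j ≤ x i - a i}

/-- The tropical polytope generated by the points `v 0, …, v (p-1)`: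
each coordinate of `x` is the maximum over `r` of `l r + v r i`. -/
def tropPoly {n p : ℕ} (v : Fin p → Fin n → α) : Set (Fin n → α) :=
  {x | ∃ l : Fin p → α, ∀ i, IsGreatest (Set.range fun r => l r + v r i) (x i)}

/-- `v` is an extreme point of `P` of type `i`. -/
def ExtremeOfType {n : ℕ} (P : Set (Fin n → α)) (v : Fin n → α) (i : Fin n) : Prop :=
  v ∈ P ∧ ∀ x ∈ P ∩ sector v i, ∃ c : α, x = fun k => v k + c

/-- `v` is an extreme point of `P`. -/
def IsExtremePt {n : ℕ} (P : Set (Fin n → α)) (v : Fin n → α) : Prop :=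
  v ∈ P ∧ ∀ x ∈ P, ∀ y ∈ P, (∀ k, v k = max (x k) (y k)) → v = x ∨ v = y

/-- The tropical half-space `H(a,I)`: `max_{i ∈ I} (x_i - a_i) ≥ max_{j ∉ I} (x_j - a_j)`. -/
def halfSpace {n : ℕ} (a : Fin n → α) (I : Set (Fin n)) : Set (Fin n → α) :=
  {x | ∃ i ∈ I, ∀ j ∉ I, x j - a j ≤ x i - a i}

/-- `S_i(a)`, the set of indices `r` such that `v r ∈ S(a, i)`. -/
def typeSet {n p : ℕ} (v : Fin p → Fin n → α) (a : Fin n → α) (i : Fin n) : Set (Fin p) :=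
  {r | v r ∈ sector a i}

/-- `a` is an `(I,j)`-pseudovertex of the tropical polytope generated by `v`. -/
def IsPseudovertex {n p : ℕ} (v : Fin p → Fin n → α) (a : Fin n → α) (I : Set (Fin n))
    (j : Fin n) : Prop :=
  (∀ r, ∃ i ∈ I, r ∈ typeSet v a i) ∧
  (∀ k ∉ I, ∃ i ∈ I, (typeSet v a i ∩ typeSet v a k).Nonempty) ∧
  (∀ i ∈ I, ∃ r, r ∈ typeSet v a i ∩ typeSet v a j ∧ ∀ h ∈ I, h ≠ i → r ∉ typeSet v a h)

end Defs

/-- `P` is pure: `P₀ = {x ∈ P | x 0 = 0}` equals the closure of its interior, relative to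
the hyperplane `{x | x 0 = 0}` with the subspace topology. -/
def IsPure {n : ℕ} [NeZero n] (P : Set (Fin n → ℝ)) : Prop :=
  letI P0 : Set {x : Fin n → ℝ // x 0 = 0} := {x | (x : Fin n → ℝ) ∈ P}
  P0 = closure (interior P0)

theorem aux_exists_gen {n p : ℕ} (v : Fin p → Fin n → ℝ) (y : Fin n → ℝ)
    (hy : y ∈ tropPoly v) (i : Fin n) : ∃ r, ∀ j, v r j - v r i ≤ y j - y i := by
  obtain ⟨l, hl⟩ := hy
  obtain ⟨r, hr⟩ := (hl i).1
  refine ⟨r, fun j => ?_⟩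
  have h := (hl j).2 ⟨r, rfl⟩
  simp only at h hr
  linarith

theorem aux_gen_mem {n p : ℕ} (v : Fin p → Fin n → ℝ) (i : Fin n) (r : Fin p) :
    v r ∈ tropPoly v := by
  have hne : (Finset.univ : Finset (Fin n)).Nonempty := ⟨i, Finset.mem_univ i⟩
  refine ⟨fun s => Finset.univ.inf' hne (fun j => v r j - v s j), fun k => ⟨⟨r, ?_⟩, ?_⟩⟩
  · simp
  · rintro _ ⟨s, rfl⟩
    have h := Finset.inf'_le (fun j => v r j - v s j) (Finset.mem_univ k)
    simp only at h ⊢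
    linarith

/-- for every `x` in the tropical polytope `P` generated by `v` and every
coordinate `i`, there is an extreme point of `P` of type `i` lying in the sector `S(x,i)`. -/
theorem exists_extreme_of_type_in_sector {n p : ℕ} (v : Fin p → Fin n → ℝ)
    (x : Fin n → ℝ) (hx : x ∈ tropPoly v) (i : Fin n) :
    ∃ w : Fin n → ℝ, ExtremeOfType (tropPoly v) w i ∧ w ∈ sector x i := by
  classical
  obtain ⟨r0, hr0⟩ := aux_exists_gen v x hx i
  obtain ⟨r, hr, hmin⟩ := Finset.exists_min_image
    (Finset.univ.filter (fun r => ∀ j, v r j - v r i ≤ x j - x i))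
    (fun r => ∑ j, (v r j - v r i)) ⟨r0, by simpa using hr0⟩
  simp only [Finset.mem_filter, Finset.mem_univ, true_and] at hr hmin
  refine ⟨v r, ⟨aux_gen_mem v i r, ?_⟩, fun j => by linarith [hr j]⟩
  rintro y ⟨hyP, hyS⟩
  obtain ⟨s, hs⟩ := aux_exists_gen v y hyP i
  have hsr : ∀ j, v s j - v s i ≤ v r j - v r i := fun j => by
    have := hyS j
    linarith [hs j]
  have h1 := hmin s (fun j => (hsr j).trans (hr j))
  have h2 := (Finset.sum_eq_sum_iff_of_le (fun j _ => hsr j)).1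
    (le_antisymm (Finset.sum_le_sum (fun j _ => hsr j)) h1)
  refine ⟨y i - v r i, funext fun j => ?_⟩
  have h3 := h2 j (Finset.mem_univ j)
  have h4 := hyS j
  linarith [hs j]
end

section
/- Let P be the tropical polytope generated by v^1,…,v^p ∈ ℝ^n. If v is an extreme point of P of type i, then there exists an open neighborhood N of v in ℝ^n such that v ∈ S(x,i) for every x ∈ P ∩ N. -/
theorem gen_mem_tropPoly_aux {n p : ℕ} (vs : Fin p → Fin n → ℝ) (r : Fin p) :
    vs r ∈ tropPoly vs := by
  refine ⟨fun s => -‖vs s - vs r‖, fun k => ⟨⟨r, by simp⟩, ?_⟩⟩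
  rintro _ ⟨s, rfl⟩
  have h := norm_le_pi_norm (vs s - vs r) k
  have h2 := le_abs_self ((vs s - vs r) k)
  rw [Real.norm_eq_abs] at h
  simp only [Pi.sub_apply] at h h2
  show -‖vs s - vs r‖ + vs s k ≤ vs r k
  linarith

/-- if `v` is an extreme point of the tropical polytope `P` of type `i`, then
there is an open neighborhood `N` of `v` such that `v ∈ S(x,i)` for every `x ∈ P ∩ N`. -/
theorem exists_nhd_extreme_of_type {n p : ℕ} (vs : Fin p → Fin n → ℝ)
    (v : Fin n → ℝ) (i : Fin n) (hv : ExtremeOfType (tropPoly vs) v i) :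
    ∃ N : Set (Fin n → ℝ), IsOpen N ∧ v ∈ N ∧
      ∀ x ∈ tropPoly vs ∩ N, v ∈ sector x i := by
  refine ⟨⋂ r : Fin p, ⋂ j : Fin n,
    {x | vs r i - v i < vs r j - v j → x j < x i - vs r i + vs r j}, ?_, ?_, ?_⟩
  · refine isOpen_iInter_of_finite fun r => isOpen_iInter_of_finite fun j => ?_
    by_cases h : vs r i - v i < vs r j - v j
    · simp only [h, true_imp_iff]
      exact isOpen_lt (by fun_prop) (by fun_prop)
    · simp [h]
  · simp only [Set.mem_iInter, Set.mem_ofPred_eq]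
    intro r j h
    linarith
  · rintro x ⟨⟨m, hm⟩, hN⟩ j
    simp only [Set.mem_iInter, Set.mem_ofPred_eq] at hN
    obtain ⟨⟨r, hr⟩, -⟩ := hm i
    have hle : ∀ k, m r + vs r k ≤ x k := fun k => (hm k).2 ⟨r, rfl⟩
    simp only at hr
    have hs : vs r ∈ sector v i := by
      intro k
      by_contra hk
      have h1 := hN r k (not_le.mp hk)
      have h2 := hle k
      linarith
    obtain ⟨c, hc⟩ := hv.2 _ ⟨gen_mem_tropPoly_aux vs r, hs⟩
    have h1 := hle j
    have h2 := congrFun hc i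
    have h3 := congrFun hc j
    linarith
end

section
/- Let n ≥ 2 and let P be the tropical polytope generated by v^1,…,v^p ∈ ℝ^n. Then P is pure if and only if every extreme point of P has exactly one extremality type, i.e., for every extreme point v of P and all indices i ≠ j, it is not the case that v is an extreme point of P of type i and also of type j. -/
theorem mem_tropPoly_iff {n p : ℕ} [NeZero n] (vs : Fin p → Fin n → ℝ) (y : Fin n → ℝ) :
    y ∈ tropPoly vs ↔ ∀ i, ∃ r, ∀ j, vs r j - y j ≤ vs r i - y i := by
  constructor
  · rintro ⟨l, hl⟩ i
    obtain ⟨⟨r, hr⟩, -⟩ := hl i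
    refine ⟨r, fun j => ?_⟩
    have h2 : l r + vs r j ≤ y j := (hl j).2 ⟨r, rfl⟩
    simp only at hr
    linarith
  · intro h
    have hm : ∀ r, ∃ k, ∀ j, y k - vs r k ≤ y j - vs r j := fun r =>
      Finite.exists_min (fun k => y k - vs r k)
    choose k hk using hm
    refine ⟨fun r => y (k r) - vs r (k r), fun i => ⟨?_, ?_⟩⟩
    · obtain ⟨r, hr⟩ := h i
      refine ⟨r, ?_⟩
      have h1 := hr (k r)
      have h2 := hk r i
      simp only
      linarith
    · rintro _ ⟨r, rfl⟩
      have h2 := hk r i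
      simp only
      linarith

theorem tropPoly_shift {n p : ℕ} [NeZero n] (vs : Fin p → Fin n → ℝ) (y z : Fin n → ℝ) (c : ℝ)
    (hz : ∀ k, z k = y k + c) (hy : y ∈ tropPoly vs) : z ∈ tropPoly vs := by
  rw [mem_tropPoly_iff] at *
  intro i
  obtain ⟨r, hr⟩ := hy i
  refine ⟨r, fun j => ?_⟩
  have := hr j
  rw [hz, hz]; linarith

theorem exists_order {n p : ℕ} (J : Fin p → Fin n → Prop)
    (H : ∀ K : Finset (Fin n), K.Nonempty → ∃ r, ∃ i ∈ K, J r i ∧ ∀ j ∈ K, J r j → j = i) :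
    ∀ (m : ℕ) (K : Finset (Fin n)), K.card = m → ∃ d : Fin n → ℝ, ∀ i ∈ K, ∃ r, J r i ∧
      ∀ k ∈ K, J r k → k ≠ i → d i < d k := by
  intro m
  induction m with
  | zero =>
    intro K hK
    rw [Finset.card_eq_zero] at hK
    subst hK
    exact ⟨0, by simp⟩
  | succ m ih =>
    intro K hK
    have hne : K.Nonempty := by
      rw [← Finset.card_pos]; omega
    obtain ⟨r, i, hi, hri, hu⟩ := H K hne
    obtain ⟨d, hd⟩ := ih (K.erase i) (by rw [Finset.card_erase_of_mem hi]; omega)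
    obtain ⟨k0, hk0⟩ := @Finite.exists_max (Fin n) ℝ _ ⟨i⟩ _ d
    refine ⟨Function.update d i (d k0 + 1), fun i' hi' => ?_⟩
    by_cases h : i' = i
    · subst h
      exact ⟨r, hri, fun k hk hrk hne => absurd (hu k hk hrk) hne⟩
    · obtain ⟨s, hs, hs2⟩ := hd i' (Finset.mem_erase.2 ⟨h, hi'⟩)
      refine ⟨s, hs, fun k hk hsk hne => ?_⟩
      rw [Function.update_of_ne h]
      by_cases hki : k = i
      · subst hki
        rw [Function.update_self]
        have := hk0 i'
        linarith
      · rw [Function.update_of_ne hki]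
        exact hs2 k (Finset.mem_erase.2 ⟨hki, hk⟩) hsk hne

theorem ExtremeOfType.isExtremePt {n : ℕ} {P : Set (Fin n → ℝ)} {v : Fin n → ℝ} {i : Fin n}
    (h : ExtremeOfType P v i) : IsExtremePt P v := by
  have key : ∀ x ∈ P, (∀ k, x k ≤ v k) → v i = x i → v = x := by
    intro x hx hle he
    obtain ⟨c, hc⟩ := h.2 x ⟨hx, fun j => by have := hle j; linarith⟩
    have h1 := congrFun hc i
    have : c = 0 := by linarith
    subst this
    rw [hc]; simp
  refine ⟨h.1, fun x hx y hy hm => ?_⟩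
  rcases le_total (x i) (y i) with h1 | h1
  · right
    exact key y hy (fun k => by rw [hm k]; exact le_max_right _ _) (by rw [hm i, max_eq_right h1])
  · left
    exact key x hx (fun k => by rw [hm k]; exact le_max_left _ _) (by rw [hm i, max_eq_left h1])

theorem exists_two_types {n p : ℕ} [NeZero n] (vs : Fin p → Fin n → ℝ) (x : Fin n → ℝ)
    (hx : x ∈ tropPoly vs) (K : Finset (Fin n)) (hK : K.Nonempty)
    (hJ : ∀ r, ∀ i ∈ K, vs r ∈ sector x i → ∃ j ∈ K, vs r ∈ sector x j ∧ j ≠ i) :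
    ∃ v i j, i ≠ j ∧ ExtremeOfType (tropPoly vs) v i ∧ ExtremeOfType (tropPoly vs) v j := by
  have hm : ∀ r, ∃ k, ∀ j, vs r j - x j ≤ vs r k - x k := fun r =>
    Finite.exists_max (fun k => vs r k - x k)
  choose k hk using hm
  let u : Fin p → Fin n → ℝ := fun r j => vs r j - (vs r (k r) - x (k r))
  have hM : ∀ r i, vs r ∈ sector x i → vs r (k r) - x (k r) = vs r i - x i :=
    fun r i h => le_antisymm (h _) (hk r i)
  let S : Set (Fin p) := {r | ∃ i ∈ K, vs r ∈ sector x i}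
  have hS : S.Nonempty := by
    obtain ⟨i, hi⟩ := hK
    obtain ⟨r, hr⟩ := (mem_tropPoly_iff vs x).1 hx i
    exact ⟨r, i, hi, hr⟩
  obtain ⟨r, ⟨i, hi, hri⟩, hmin⟩ := (Set.toFinite S).exists_minimalFor u S hS
  have key : ∀ i ∈ K, vs r ∈ sector x i → ExtremeOfType (tropPoly vs) (u r) i := by
    intro i hi hri
    have hui : u r i = x i := by
      simp only [u]; rw [hM r i hri]; ring
    refine ⟨?_, ?_⟩
    · rw [mem_tropPoly_iff]
      intro a
      refine ⟨r, fun j => ?_⟩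
      simp only [u]; linarith
    · rintro w ⟨hw, hws⟩
      obtain ⟨s, hs⟩ := (mem_tropPoly_iff vs w).1 hw i
      have hux : ∀ j, u r j ≤ x j := fun j => by
        simp only [u]; linarith [hk r j]
      have hss : vs s ∈ sector x i := by
        intro j
        have h1 := hs j
        have h2 := hws j
        have h3 := hux j
        linarith
      have hus : ∀ j, u s j = vs s j - (vs s i - x i) := fun j => by
        simp only [u]; rw [hM s i hss]
      have hle : u s ≤ u r := by
        intro j
        rw [hus]
        have h1 := hs j
        have h2 := hws j
        linarith
      have hge := hmin ⟨i, hi, hss⟩ hle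
      refine ⟨w i - u r i, ?_⟩
      funext j
      have h1 := hs j
      have h2 := hws j
      have h3 := hge j
      rw [hus] at h3
      linarith
  obtain ⟨j, hj, hrj, hne⟩ := hJ r i hi hri
  exact ⟨u r, i, j, hne.symm, key i hi hri, key j hj hrj⟩

theorem cont_coord {n : ℕ} [NeZero n] (a : ℝ) (j : Fin n) :
    Continuous fun x : {x : Fin n → ℝ // x 0 = 0} => a - x.1 j :=
  continuous_const.sub ((continuous_apply j).comp continuous_subtype_val)

theorem isClosed_P0 {n p : ℕ} [NeZero n] (vs : Fin p → Fin n → ℝ) :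
    IsClosed {x : {x : Fin n → ℝ // x 0 = 0} | (x : Fin n → ℝ) ∈ tropPoly vs} := by
  simp only [mem_tropPoly_iff, Set.ofPred_forall, Set.ofPred_exists]
  refine isClosed_iInter fun i => isClosed_iUnion_of_finite fun r => isClosed_iInter fun j => ?_
  exact isClosed_le (cont_coord _ _) (cont_coord _ _)

/-- Move `x` in direction `d`, staying in the hyperplane. -/
def hypMove {n : ℕ} [NeZero n] (x : {x : Fin n → ℝ // x 0 = 0}) (d : Fin n → ℝ) (e : ℝ) :
    {x : Fin n → ℝ // x 0 = 0} :=
  ⟨fun k => x.1 k + e * (d k - d 0), by simp [x.2]⟩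

theorem hypMove_tendsto {n : ℕ} [NeZero n] (x : {x : Fin n → ℝ // x 0 = 0}) (d : Fin n → ℝ) :
    Filter.Tendsto (hypMove x d) (nhdsWithin 0 (Set.Ioi 0)) (nhds x) := by
  have hc : Continuous (hypMove x d) := by
    unfold hypMove
    fun_prop
  have h0 : hypMove x d 0 = x := by
    apply Subtype.ext; funext k; simp [hypMove]
  have := hc.tendsto 0
  rw [h0] at this
  exact this.mono_left nhdsWithin_le_nhds

theorem mem_closure_interior {n p : ℕ} [NeZero n] (vs : Fin p → Fin n → ℝ)
    (x : {x : Fin n → ℝ // x 0 = 0}) (d : Fin n → ℝ)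
    (hd : ∀ i, ∃ r, vs r ∈ sector x.1 i ∧ ∀ k, vs r ∈ sector x.1 k → k ≠ i → d i < d k) :
    x ∈ closure (interior
      {x : {x : Fin n → ℝ // x 0 = 0} | (x : Fin n → ℝ) ∈ tropPoly vs}) := by
  choose r hr hr2 using hd
  let U : Set {x : Fin n → ℝ // x 0 = 0} :=
    {y | ∀ i k, k ≠ i → vs (r i) k - y.1 k < vs (r i) i - y.1 i}
  have hU : IsOpen U := by
    simp only [U, Set.ofPred_forall]
    refine isOpen_iInter_of_finite fun i => isOpen_iInter_of_finite fun k =>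
      isOpen_iInter_of_finite fun _ => ?_
    exact isOpen_lt (cont_coord _ _) (cont_coord _ _)
  have hUP : U ⊆ {x : {x : Fin n → ℝ // x 0 = 0} | (x : Fin n → ℝ) ∈ tropPoly vs} := by
    intro y hy
    rw [Set.mem_ofPred_eq, mem_tropPoly_iff]
    intro i
    refine ⟨r i, fun j => ?_⟩
    by_cases h : j = i
    · rw [h]
    · exact (hy i j h).le
  have hUI := interior_maximal hUP hU
  refine closure_mono hUI ?_
  refine mem_closure_of_tendsto (hypMove_tendsto x d) ?_
  simp only [U, Set.mem_ofPred_eq, Filter.eventually_all]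
  intro i k hki
  by_cases hk : vs (r i) ∈ sector x.1 k
  · have h1 := hr2 i k hk hki
    have h2 := hk i
    have h3 := hr i k
    filter_upwards [self_mem_nhdsWithin] with e he
    have he' : 0 < e := he
    have := mul_lt_mul_of_pos_left h1 he'
    simp only [hypMove]
    linarith
  · have hlt : vs (r i) k - x.1 k < vs (r i) i - x.1 i := by
      by_contra hcon
      push Not at hcon
      exact hk fun j => (hr i j).trans hcon
    have hop : IsOpen {y : {x : Fin n → ℝ // x 0 = 0} |
        vs (r i) k - y.1 k < vs (r i) i - y.1 i} :=
      isOpen_lt (cont_coord _ _) (cont_coord _ _)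
    exact (hypMove_tendsto x d).eventually (hop.mem_nhds hlt)

theorem near_lt {n p : ℕ} [NeZero n] (vs : Fin p → Fin n → ℝ)
    (v : {x : Fin n → ℝ // x 0 = 0}) (i : Fin n)
    (hv : ExtremeOfType (tropPoly vs) v.1 i) :
    ∀ᶠ y in nhds v, y ∈ interior
      {x : {x : Fin n → ℝ // x 0 = 0} | (x : Fin n → ℝ) ∈ tropPoly vs} →
      ∀ j, j ≠ i → v.1 j - y.1 j < v.1 i - y.1 i := by
  have h1 : ∀ᶠ y in nhds v, ∀ r, vs r ∈ sector y.1 i → vs r ∈ sector v.1 i := by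
    rw [Filter.eventually_all]
    intro r
    by_cases h : vs r ∈ sector v.1 i
    · exact Filter.Eventually.of_forall fun _ _ => h
    · have hcl : IsClosed {y : {x : Fin n → ℝ // x 0 = 0} | vs r ∈ sector y.1 i} := by
        have he : {y : {x : Fin n → ℝ // x 0 = 0} | vs r ∈ sector y.1 i} =
            ⋂ j, {y : {x : Fin n → ℝ // x 0 = 0} | vs r j - y.1 j ≤ vs r i - y.1 i} := by
          ext y
          simp [sector]
        rw [he]
        refine isClosed_iInter fun j => ?_
        exact isClosed_le (cont_coord _ _) (cont_coord _ _)
      filter_upwards [hcl.isOpen_compl.mem_nhds h] with y hy hy2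
      exact absurd hy2 hy
  have h2 := eventually_eventually_nhds.2 h1
  filter_upwards [h2] with y hy hyI j hji
  have hT := hypMove_tendsto y (Pi.single i (1 : ℝ))
  have hP := hT.eventually (mem_interior_iff_mem_nhds.1 hyI)
  obtain ⟨e, ⟨he1, he2⟩, he⟩ := ((hP.and (hT.eventually hy)).and self_mem_nhdsWithin).exists
  have he' : 0 < e := he
  obtain ⟨r, hr⟩ := (mem_tropPoly_iff vs _).1 he1 i
  have hrs := he2 r hr
  have hrP : vs r ∈ tropPoly vs := by
    rw [mem_tropPoly_iff]
    exact fun a => ⟨r, fun b => by simp⟩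
  obtain ⟨c, hc⟩ := hv.2 _ ⟨hrP, hrs⟩
  have h3 := hr j
  rw [hc] at h3
  simp only [hypMove, Pi.single_eq_same, Pi.single_eq_of_ne hji] at h3
  linarith

theorem ExtremeOfType.shift {n p : ℕ} [NeZero n] (vs : Fin p → Fin n → ℝ)
    {v w : Fin n → ℝ} {i : Fin n} (c : ℝ) (hw : ∀ k, w k = v k + c)
    (h : ExtremeOfType (tropPoly vs) v i) : ExtremeOfType (tropPoly vs) w i := by
  refine ⟨tropPoly_shift vs v w c hw h.1, ?_⟩
  rintro x ⟨hx, hxs⟩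
  obtain ⟨a, ha⟩ := h.2 x ⟨hx, fun j => by
    have := hxs j
    rw [hw, hw] at this
    linarith⟩
  refine ⟨a - c, ?_⟩
  rw [ha]
  funext k
  rw [hw]; ring

/-- the tropical polytope `P` is pure iff every extreme point of `P` has exactly
one extremality type. -/
theorem isPure_iff_unique_extremality_type {n p : ℕ} [NeZero n] (hn : 2 ≤ n)
    (vs : Fin p → Fin n → ℝ) :
    IsPure (tropPoly vs) ↔
      ∀ v : Fin n → ℝ, IsExtremePt (tropPoly vs) v →
        ∀ i j : Fin n, i ≠ j →
          ¬(ExtremeOfType (tropPoly vs) v i ∧ ExtremeOfType (tropPoly vs) v j) := by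
  constructor
  · rintro hpure v - i j hij ⟨hi, hj⟩
    let w : {x : Fin n → ℝ // x 0 = 0} := ⟨fun k => v k + (- v 0), by simp⟩
    have hwi : ExtremeOfType (tropPoly vs) w.1 i := hi.shift vs (- v 0) (fun _ => rfl)
    have hwj : ExtremeOfType (tropPoly vs) w.1 j := hj.shift vs (- v 0) (fun _ => rfl)
    have hw : w ∈ {x : {x : Fin n → ℝ // x 0 = 0} | (x : Fin n → ℝ) ∈ tropPoly vs} := hwi.1
    unfold IsPure at hpure
    rw [hpure] at hw
    obtain ⟨y, hyI, h1, h2⟩ := ((mem_closure_iff_frequently.1 hw).and_eventually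
      ((near_lt vs w i hwi).and (near_lt vs w j hwj))).exists
    exact lt_asymm (h1 hyI j hij.symm) (h2 hyI i hij)
  · intro H
    unfold IsPure
    refine Set.Subset.antisymm ?_ (closure_minimal interior_subset (isClosed_P0 vs))
    intro x hx
    have hK : ∀ K : Finset (Fin n), K.Nonempty → ∃ r, ∃ i ∈ K, vs r ∈ sector x.1 i ∧
        ∀ j ∈ K, vs r ∈ sector x.1 j → j = i := by
      intro K hK
      by_contra hcon
      push Not at hcon
      obtain ⟨v, i, j, hij, h1, h2⟩ := exists_two_types vs x.1 hx K hK hcon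
      exact H v h1.isExtremePt i j hij ⟨h1, h2⟩
    obtain ⟨d, hd⟩ := exists_order (fun r i => vs r ∈ sector x.1 i) hK _ Finset.univ rfl
    exact mem_closure_interior vs x d fun i => by
      obtain ⟨r, hr, hr2⟩ := hd i (Finset.mem_univ i)
      exact ⟨r, hr, fun k => hr2 k (Finset.mem_univ k)⟩
end

section
/- Let n ≥ 2 and let P be the tropical polytope generated by v^1,…,v^p ∈ ℝ^n. Let (a^1,I^1),…,(a^m,I^m) be finitely many pairs where each a^s ∈ P and each I^s is a nonempty proper subset of {1,…,n}, such that P = ⋂_{s=1}^m H(a^s,I^s) and, for every s, ⋂_{t ≠ s} H(a^t,I^t) ≠ P. Then for every s ∈ {1,…,m} there exist a nonempty proper subset I ⊆ {1,…,n} and an index j ∈ {1,…,n} \ I such that a^s is an (I,j)-pseudovertex of P. -/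
theorem halfSpace_max {n : ℕ} {a : Fin n → ℝ} {I : Set (Fin n)} {x y : Fin n → ℝ}
    (hx : x ∈ halfSpace a I) (hy : y ∈ halfSpace a I) (c d : ℝ) :
    (fun k => max (x k - c) (y k - d)) ∈ halfSpace a I := by
  obtain ⟨i, hi, hxi⟩ := hx
  obtain ⟨i', hi', hyi⟩ := hy
  have h1 := le_max_left (x i - c) (y i - d)
  have h2 := le_max_right (x i' - c) (y i' - d)
  rcases le_total (max (x i - c) (y i - d) - a i) (max (x i' - c) (y i' - d) - a i') with h | h
  · refine ⟨i', hi', fun j hj => ?_⟩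
    have := hxi j hj
    have := hyi j hj
    have : max (x j - c) (y j - d) ≤ max (x i' - c) (y i' - d) - a i' + a j :=
      max_le (by linarith) (by linarith)
    show max (x j - c) (y j - d) - a j ≤ max (x i' - c) (y i' - d) - a i'
    linarith
  · refine ⟨i, hi, fun j hj => ?_⟩
    have := hxi j hj
    have := hyi j hj
    have : max (x j - c) (y j - d) ≤ max (x i - c) (y i - d) - a i + a j :=
      max_le (by linarith) (by linarith)
    show max (x j - c) (y j - d) - a j ≤ max (x i - c) (y i - d) - a i
    linarith

theorem gen_mem_tropPoly {n p : ℕ} [Nonempty (Fin n)] (v : Fin p → Fin n → ℝ) (r : Fin p) :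
    v r ∈ tropPoly v := by
  have h : ∀ q, ∃ k0, ∀ k, v r k0 - v q k0 ≤ v r k - v q k := fun q =>
    Finite.exists_min (fun k => v r k - v q k)
  choose f hf using h
  refine ⟨fun q => v r (f q) - v q (f q), fun i => ⟨⟨r, by simp⟩, ?_⟩⟩
  rintro _ ⟨q, rfl⟩
  have := hf q i
  show v r (f q) - v q (f q) + v q i ≤ v r i
  linarith

/-- in a non-redundant external representation of the tropical polytope `P` by
half-spaces whose apices belong to `P`, every apex is an `(I,j)`-pseudovertex of `P`. -/
theorem nonredundant_apex_isPseudovertex {n p m : ℕ} (hn : 2 ≤ n)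
    (vs : Fin p → Fin n → ℝ) (a : Fin m → Fin n → ℝ) (I : Fin m → Set (Fin n))
    (ha : ∀ s, a s ∈ tropPoly vs)
    (hIne : ∀ s, (I s).Nonempty) (hIpr : ∀ s, I s ≠ Set.univ)
    (hrep : tropPoly vs = ⋂ s, halfSpace (a s) (I s))
    (hnonred : ∀ s : Fin m, (⋂ t ∈ ({s}ᶜ : Set (Fin m)), halfSpace (a t) (I t)) ≠ tropPoly vs) :
    ∀ s : Fin m, ∃ (I' : Set (Fin n)) (j : Fin n), I'.Nonempty ∧ I' ≠ Set.univ ∧ j ∉ I' ∧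
      IsPseudovertex vs (a s) I' j := by
  intro s
  haveI : Nonempty (Fin n) := ⟨⟨0, by omega⟩⟩
  have hsub : ∀ y ∈ tropPoly vs, ∀ t, y ∈ halfSpace (a t) (I t) := by
    intro y hy t
    rw [hrep] at hy
    exact Set.mem_iInter.1 hy t
  have hmem : ∀ y, (∀ t, y ∈ halfSpace (a t) (I t)) → y ∈ tropPoly vs := by
    intro y hy
    rw [hrep]
    exact Set.mem_iInter.2 hy
  -- the separating point
  obtain ⟨x, hxt, hxs⟩ : ∃ x : Fin n → ℝ, (∀ t, t ≠ s → x ∈ halfSpace (a t) (I t)) ∧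
      x ∉ halfSpace (a s) (I s) := by
    by_contra hcon
    push Not at hcon
    apply hnonred s
    ext y
    simp only [Set.mem_iInter, Set.mem_compl_iff, Set.mem_singleton_iff]
    constructor
    · intro hy
      apply hmem
      intro t
      by_cases hts : t = s
      · subst hts
        exact hcon y hy
      · exact hy t hts
    · intro hy t _
      exact hsub y hy t
  obtain ⟨j, hj⟩ := Finite.exists_max (fun k => x k - a s k)
  have hxI : ∀ i ∈ I s, x i - a s i < x j - a s j := by
    intro i hi
    by_contra hcon
    push Not at hcon
    exact hxs ⟨i, hi, fun k _ => (hj k).trans hcon⟩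
  have hjI : j ∉ I s := fun h => lt_irrefl _ (hxI j h)
  -- every generator has a maximal coordinate in `I s`
  have hhit : ∀ r, ∃ i ∈ I s, r ∈ typeSet vs (a s) i := by
    intro r
    obtain ⟨i, hi, hir⟩ := hsub _ (gen_mem_tropPoly vs r) s
    obtain ⟨k, hk⟩ := Finite.exists_max (fun k => vs r k - a s k)
    by_cases hkI : k ∈ I s
    · exact ⟨k, hkI, hk⟩
    · exact ⟨i, hi, fun l => (hk l).trans (hir k hkI)⟩
  -- key step
  have key : ∀ r0, ∃ r, r ∈ typeSet vs (a s) j ∧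
      ∀ k ∈ I s, r ∈ typeSet vs (a s) k → r0 ∈ typeSet vs (a s) k := by
    intro r0
    obtain ⟨i, hi, hir⟩ := hhit r0
    have hir' : ∀ l, vs r0 l - a s l ≤ vs r0 i - a s i := hir
    set M := x j - a s j with hM
    set μ := vs r0 i - a s i with hμ
    have hz : (fun k => max (x k - M) (vs r0 k - μ)) ∈ tropPoly vs := by
      apply hmem
      intro t
      by_cases hts : t = s
      · subst hts
        refine ⟨i, hi, fun k _ => ?_⟩
        have h1 := hj k
        have h2 := hir' k
        have h3 := le_max_right (x i - M) (vs r0 i - μ)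
        have h4 : max (x k - M) (vs r0 k - μ) ≤ a t k := max_le (by linarith) (by linarith)
        show max (x k - M) (vs r0 k - μ) - a t k ≤ max (x i - M) (vs r0 i - μ) - a t i
        linarith
      · exact halfSpace_max (hxt t hts) (hsub _ (gen_mem_tropPoly vs r0) t) M μ
    obtain ⟨l, hl⟩ := hz
    obtain ⟨⟨r, hr⟩, _⟩ := hl j
    have hr' : l r + vs r j = max (x j - M) (vs r0 j - μ) := hr
    have hle : ∀ k, l r + vs r k ≤ max (x k - M) (vs r0 k - μ) := fun k => (hl k).2 ⟨r, rfl⟩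
    have hzk : ∀ k, max (x k - M) (vs r0 k - μ) ≤ a s k := fun k =>
      max_le (by linarith [hj k]) (by linarith [hir' k])
    have hzj := le_max_left (x j - M) (vs r0 j - μ)
    have hrj : r ∈ typeSet vs (a s) j := by
      intro k
      have := hle k
      have := hzk k
      linarith
    refine ⟨r, hrj, fun k hk hrk => ?_⟩
    have h1 : vs r j - a s j ≤ vs r k - a s k := hrk j
    have h2 := hxI k hk
    have h3 : a s k ≤ max (x k - M) (vs r0 k - μ) := by
      have := hle k
      linarith
    have h4 : a s k ≤ vs r0 k - μ := by
      rcases le_max_iff.1 h3 with h | h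
      · linarith
      · exact h
    intro q
    have := hir' q
    linarith
  -- a minimal hitting set
  obtain ⟨T, hT⟩ := (Set.toFinite {T : Set (Fin n) | T ⊆ I s ∧
    ∀ r, ∃ i ∈ T, r ∈ typeSet vs (a s) i}).exists_minimal ⟨I s, subset_rfl, hhit⟩
  obtain ⟨hTI, hThit⟩ := hT.prop
  obtain ⟨l, hl⟩ := ha s
  have hcov : ∀ k, ∃ r, r ∈ typeSet vs (a s) k := by
    intro k
    obtain ⟨⟨r, hr⟩, _⟩ := hl k
    have hr' : l r + vs r k = a s k := hr
    refine ⟨r, fun q => ?_⟩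
    have : l r + vs r q ≤ a s q := (hl q).2 ⟨r, rfl⟩
    linarith
  obtain ⟨r1, _⟩ := hcov j
  refine ⟨T, j, ?_, ?_, fun h => hjI (hTI h), hThit, ?_, ?_⟩
  · obtain ⟨i, hi, _⟩ := hThit r1
    exact ⟨i, hi⟩
  · rintro rfl
    exact hjI (hTI (Set.mem_univ j))
  · intro k _
    obtain ⟨r, hr⟩ := hcov k
    obtain ⟨i, hi, hri⟩ := hThit r
    exact ⟨i, hi, r, hri, hr⟩
  · intro i hi
    obtain ⟨r0, hr0⟩ : ∃ r0, ∀ h ∈ T, h ≠ i → r0 ∉ typeSet vs (a s) h := by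
      by_contra hcon
      push Not at hcon
      have hle : T ≤ T \ {i} := hT.le_of_le ⟨Set.diff_subset.trans hTI, fun r => by
        obtain ⟨h, h1, h2, h3⟩ := hcon r
        exact ⟨h, ⟨h1, h2⟩, h3⟩⟩ Set.diff_subset
      exact (hle hi).2 rfl
    obtain ⟨r, hrj, hr⟩ := key r0
    have hno : ∀ h ∈ T, h ≠ i → r ∉ typeSet vs (a s) h := fun h hh hne hrh =>
      hr0 h hh hne (hr h (hTI hh) hrh)
    obtain ⟨i', hi', hri'⟩ := hThit r
    have : i' = i := by
      by_contra hne
      exact hno i' hi' hne hri'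
    subst this
    exact ⟨r, ⟨hri', hrj⟩, hno⟩
end

section
/- Let n ≥ 2 and let u^1,…,u^{n−1} ∈ ℝ^n be in general position. Then there exists exactly one signed tropical hyperplane (as a subset of ℝ^n) containing all the points u^1,…,u^{n−1}. -/
/-- An `m × m` real matrix is tropically singular if the maximum over permutations `σ` of
`∑ i, U i (σ i)` is attained by at least two permutations. -/
def TropSingular {m : ℕ} (U : Matrix (Fin m) (Fin m) ℝ) : Prop :=
  ∃ σ τ : Equiv.Perm (Fin m), σ ≠ τ ∧
    (∑ i, U i (σ i)) = (∑ i, U i (τ i)) ∧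
    ∀ ρ : Equiv.Perm (Fin m), (∑ i, U i (ρ i)) ≤ (∑ i, U i (σ i))

/-- Points `u 0, …, u (q-1)` of `ℝ^n` are in general position if every square submatrix of
the `n × q` matrix whose columns are these points is tropically non-singular. -/
def InGeneralPosition {n q : ℕ} (u : Fin q → Fin n → ℝ) : Prop :=
  ∀ (k : ℕ) (ri : Fin k → Fin n) (ci : Fin k → Fin q),
    Function.Injective ri → Function.Injective ci →
      ¬ TropSingular (Matrix.of fun s t : Fin k => u (ci t) (ri s))

/-- `H` is a signed tropical hyperplane: a set of the form
`{x | max_{i ∈ I} (x_i - a_i) = max_{j ∉ I} (x_j - a_j)}` for some apex `a` and some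
nonempty proper subset `I` of the coordinates. -/
def IsSignedHyperplane {n : ℕ} (H : Set (Fin n → ℝ)) : Prop :=
  ∃ (a : Fin n → ℝ) (I : Set (Fin n)), I.Nonempty ∧ I ≠ Set.univ ∧
    H = {x | (∃ i ∈ I, ∀ j ∉ I, x j - a j ≤ x i - a i) ∧
             (∃ j ∉ I, ∀ i ∈ I, x i - a i ≤ x j - a j)}

open Finset in
lemma aux_A {n q : ℕ} {u : Fin q → Fin n → ℝ} (hgen : InGeneralPosition u)
    (S : Finset (Fin q)) (f g : Fin q → Fin n) (hf : Set.InjOn f S) (hg : Set.InjOn g S)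
    (him : S.image f = S.image g)
    (hsum : ∑ r ∈ S, u r (f r) = ∑ r ∈ S, u r (g r))
    (hmax : ∀ h : Fin q → Fin n, Set.InjOn h S → S.image h = S.image f →
      ∑ r ∈ S, u r (h r) ≤ ∑ r ∈ S, u r (f r)) :
    ∀ r ∈ S, f r = g r := by
  classical
  by_contra hne
  push Not at hne
  obtain ⟨r0, hr0, hr0ne⟩ := hne
  let e : Fin S.card ≃ S := S.equivFin.symm
  let ci : Fin S.card → Fin q := fun t => (e t : Fin q)
  have hci : Function.Injective ci := Subtype.val_injective.comp e.injective
  have hciS : ∀ t, ci t ∈ S := fun t => (e t).2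
  have hri : Function.Injective (fun t => f (ci t)) := fun s t h =>
    hci (hf (hciS s) (hciS t) h)
  have hgi : Function.Injective (fun t => g (ci t)) := fun s t h =>
    hci (hg (hciS s) (hciS t) h)
  have sumS : ∀ F : Fin q → ℝ, ∑ r ∈ S, F r = ∑ t, F (ci t) := by
    intro F
    rw [← Finset.sum_coe_sort S F]
    exact (Equiv.sum_comp e (fun r : S => F r)).symm
  have hex : ∀ s, ∃ t, g (ci t) = f (ci s) := by
    intro s
    have : f (ci s) ∈ S.image g := him ▸ mem_image_of_mem f (hciS s)
    obtain ⟨r, hr, hrr⟩ := mem_image.1 this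
    exact ⟨e.symm ⟨r, hr⟩, by simp [ci, hrr]⟩
  choose τ hτ using hex
  have hτi : Function.Injective τ := fun s t h => hri (by
    have h1 := hτ s
    have h2 := hτ t
    rw [h] at h1
    exact h1.symm.trans h2)
  let τe : Equiv.Perm (Fin S.card) := Equiv.ofBijective τ (Finite.injective_iff_bijective.1 hτi)
  have hτe : ∀ s, g (ci (τe s)) = f (ci s) := hτ
  refine hgen S.card (fun t => f (ci t)) ci hri hci ⟨1, τe, ?_, ?_, ?_⟩
  · intro h
    have h1 := hτe (e.symm ⟨r0, hr0⟩)
    rw [← h] at h1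
    simp [ci] at h1
    exact hr0ne h1.symm
  · simp only [Matrix.of_apply, Equiv.Perm.coe_one, id]
    rw [← sumS (fun r => u r (f r)), hsum, sumS, ← Equiv.sum_comp τe]
    exact Finset.sum_congr rfl fun s _ => by rw [hτe]
  · intro ρ
    simp only [Matrix.of_apply, Equiv.Perm.coe_one, id]
    let h : Fin q → Fin n := fun r => if hr : r ∈ S then f (ci (ρ.symm (e.symm ⟨r, hr⟩))) else f r
    have hh : ∀ s, h (ci (ρ s)) = f (ci s) := by
      intro s
      simp [h, ci]
    have hh2 : ∀ r ∈ S, ∃ s, r = ci (ρ s) := by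
      intro r hr
      exact ⟨ρ.symm (e.symm ⟨r, hr⟩), by simp [ci]⟩
    have := hmax h ?_ ?_
    · rw [sumS, sumS, ← Equiv.sum_comp ρ] at this
      simpa [hh] using this
    · intro r hr r' hr' hrr
      obtain ⟨s, rfl⟩ := hh2 r hr
      obtain ⟨s', rfl⟩ := hh2 r' hr'
      rw [hh, hh] at hrr
      rw [hri hrr]
    · apply Finset.eq_of_subset_of_card_le
      · intro x hx
        obtain ⟨r, hr, rfl⟩ := mem_image.1 hx
        obtain ⟨s, rfl⟩ := hh2 r hr
        rw [hh]
        exact mem_image_of_mem f (hciS s)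
      · rw [card_image_of_injOn hf, card_image_of_injOn]
        intro r hr r' hr' hrr
        obtain ⟨s, rfl⟩ := hh2 r hr
        obtain ⟨s', rfl⟩ := hh2 r' hr'
        rw [hh, hh] at hrr
        rw [hri hrr]

/-- tightness -/
def AuxTight {n : ℕ} (x a : Fin n → ℝ) (i : Fin n) : Prop := ∀ j, x j - a j ≤ x i - a i

lemma aux_mem {n : ℕ} (x a : Fin n → ℝ) (I : Set (Fin n)) :
    x ∈ {x | (∃ i ∈ I, ∀ j ∉ I, x j - a j ≤ x i - a i) ∧
             (∃ j ∉ I, ∀ i ∈ I, x i - a i ≤ x j - a j)} ↔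
    ∃ i ∈ I, ∃ j ∉ I, AuxTight x a i ∧ AuxTight x a j := by
  constructor
  · rintro ⟨⟨i, hi, h1⟩, ⟨j, hj, h2⟩⟩
    refine ⟨i, hi, j, hj, ?_, ?_⟩ <;> intro k <;> by_cases hk : k ∈ I
    · exact (h2 k hk).trans (h1 j hj)
    · exact h1 k hk
    · exact h2 k hk
    · exact (h1 k hk).trans (h2 i hi)
  · rintro ⟨i, hi, j, hj, h1, h2⟩
    exact ⟨⟨i, hi, fun k _ => h1 k⟩, ⟨j, hj, fun k _ => h2 k⟩⟩

open Finset in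
lemma aux_A' {n q : ℕ} {u : Fin q → Fin n → ℝ} (hgen : InGeneralPosition u) (a : Fin n → ℝ)
    (S : Finset (Fin q)) (f g : Fin q → Fin n) (hf : Set.InjOn f S) (hg : Set.InjOn g S)
    (him : S.image f = S.image g)
    (hft : ∀ r ∈ S, AuxTight (u r) a (f r)) (hgt : ∀ r ∈ S, AuxTight (u r) a (g r)) :
    ∀ r ∈ S, f r = g r := by
  classical
  have key : ∀ h h' : Fin q → Fin n, Set.InjOn h S → Set.InjOn h' S → S.image h = S.image h' →
      (∀ r ∈ S, AuxTight (u r) a (h' r)) → ∑ r ∈ S, u r (h r) ≤ ∑ r ∈ S, u r (h' r) := by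
    intro h h' hh hh' him ht
    have e1 : ∑ r ∈ S, a (h r) = ∑ r ∈ S, a (h' r) := by
      rw [← Finset.sum_image (f := a) hh, ← Finset.sum_image (f := a) hh', him]
    have e2 : ∑ r ∈ S, (u r (h r) - a (h r)) ≤ ∑ r ∈ S, (u r (h' r) - a (h' r)) :=
      Finset.sum_le_sum fun r hr => ht r hr _
    rw [Finset.sum_sub_distrib, Finset.sum_sub_distrib] at e2
    linarith
  exact aux_A hgen S f g hf hg him
    (le_antisymm (key f g hf hg him hgt) (key g f hg hf him.symm hft))
    fun h hh hi => key h f hh hf hi hft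

open Finset in
lemma aux_B {n q : ℕ} (Z : Fin q → Finset (Fin n)) (S : Finset (Fin q))
    (h : ∀ T ⊆ S, T.Nonempty → T.card + 1 ≤ (T.biUnion Z).card) (i : Fin n) :
    ∃ f : Fin q → Fin n, Set.InjOn f S ∧ ∀ r ∈ S, f r ∈ Z r ∧ f r ≠ i := by
  classical
  have := (Finset.all_card_le_biUnion_card_iff_exists_injective
    (fun r : S => (Z r).erase i)).1 ?_
  · obtain ⟨f, hf, hf2⟩ := this
    refine ⟨fun r => if hr : r ∈ S then f ⟨r, hr⟩ else i, ?_, ?_⟩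
    · intro r hr s hs hrs
      have hr' : r ∈ S := hr
      have hs' : s ∈ S := hs
      simp only [hr', hs', dite_true] at hrs
      simpa using hf hrs
    · intro r hr
      have := hf2 ⟨r, hr⟩
      simp only [hr, dite_true]
      rw [mem_erase] at this
      exact ⟨this.2, this.1⟩
  · intro T
    rcases T.eq_empty_or_nonempty with rfl | hT
    · simp
    have h1 := h (T.image Subtype.val) (by intro x; simp; tauto) (hT.image _)
    rw [card_image_of_injective _ Subtype.val_injective] at h1
    have h2 : ((T.image Subtype.val).biUnion Z).erase i ⊆ T.biUnion (fun r : S => (Z r).erase i) := by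
      intro x hx
      simp only [mem_erase, mem_biUnion, mem_image] at hx ⊢
      obtain ⟨hx, r, ⟨r', hr', rfl⟩, hr⟩ := hx
      exact ⟨r', hr', hx, hr⟩
    have h3 := card_le_card h2
    have h4 := pred_card_le_card_erase (s := (T.image Subtype.val).biUnion Z) (a := i)
    omega

open Finset in
lemma aux_C {n q : ℕ} {u : Fin q → Fin n → ℝ} (hgen : InGeneralPosition u) (a : Fin n → ℝ)
    (Z : Fin q → Finset (Fin n)) (hZ : ∀ r, ∀ i ∈ Z r, AuxTight (u r) a i)
    (hc : ∀ r, 2 ≤ (Z r).card) (S : Finset (Fin q)) (hS : S.Nonempty) :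
    S.card + 1 ≤ (S.biUnion Z).card := by
  classical
  induction S using Finset.strongInduction with
  | H S ih =>
  by_contra hcon
  obtain ⟨r, hr⟩ := hS
  obtain ⟨z, hz, w, hw, hzw⟩ := Finset.one_lt_card.1 (hc r)
  have hB : ∀ z ∈ Z r, ∃ f : Fin q → Fin n, Set.InjOn f S ∧ (∀ r ∈ S, f r ∈ Z r) ∧ f r = z := by
    intro z hz
    obtain ⟨f, hf, hf2⟩ := aux_B Z (S.erase r)
      (fun T hT hT2 => ih T (lt_of_le_of_lt hT (erase_ssubset hr)) hT2) z
    refine ⟨Function.update f r z, ?_, ?_, by simp⟩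
    · intro s hs t ht hst
      by_cases h1 : s = r <;> by_cases h2 : t = r
      · rw [h1, h2]
      · subst h1
        simp [h2] at hst
        exact absurd hst.symm (hf2 t (mem_erase.2 ⟨h2, ht⟩)).2
      · subst h2
        simp [h1] at hst
        exact absurd hst (hf2 s (mem_erase.2 ⟨h1, hs⟩)).2
      · simp [h1, h2] at hst
        exact hf (by simpa [h1] using hs) (by simpa [h2] using ht) hst
    · intro s hs
      by_cases h1 : s = r
      · subst h1; simpa using hz
      · simpa [h1] using (hf2 s (mem_erase.2 ⟨h1, hs⟩)).1
  obtain ⟨f, hf, hf2, hfz⟩ := hB z hz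
  obtain ⟨g, hg, hg2, hgw⟩ := hB w hw
  have him : ∀ f : Fin q → Fin n, Set.InjOn f S → (∀ r ∈ S, f r ∈ Z r) →
      S.image f = S.biUnion Z := by
    intro f hf hf2
    apply eq_of_subset_of_card_le
    · intro x hx
      obtain ⟨s, hs, rfl⟩ := mem_image.1 hx
      exact mem_biUnion.2 ⟨s, hs, hf2 s hs⟩
    · rw [card_image_of_injOn hf]; omega
  have := aux_A' hgen a S f g hf hg ((him f hf hf2).trans (him g hg hg2).symm)
    (fun r hr => hZ r _ (hf2 r hr)) (fun r hr => hZ r _ (hg2 r hr)) r hr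
  exact hzw (hfz.symm.trans (this.trans hgw))

open Finset in
lemma aux_img {m : ℕ} (f : Fin m → Fin (m + 1)) (hf : Function.Injective f) (i : Fin (m + 1))
    (hi : ∀ r, f r ≠ i) : univ.image f = univ.erase i := by
  classical
  apply eq_of_subset_of_card_le
  · intro x hx
    obtain ⟨s, hs, rfl⟩ := mem_image.1 hx
    simp [hi]
  · rw [card_image_of_injective _ hf]; simp

/-- matchings avoiding a coordinate -/
lemma aux_match {m : ℕ} {u : Fin m → Fin (m + 1) → ℝ} (hgen : InGeneralPosition u)
    (a : Fin (m + 1) → ℝ)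
    (Z : Fin m → Finset (Fin (m + 1))) (hZ : ∀ r, ∀ i ∈ Z r, AuxTight (u r) a i)
    (hc : ∀ r, 2 ≤ (Z r).card) (i : Fin (m + 1)) :
    ∃ f : Fin m → Fin (m + 1), Function.Injective f ∧ ∀ r, f r ∈ Z r ∧ f r ≠ i := by
  obtain ⟨f, hf, hf2⟩ := aux_B Z Finset.univ (fun T _ hT => aux_C hgen a Z hZ hc T hT) i
  exact ⟨f, by simpa using hf, fun r => hf2 r (Finset.mem_univ _)⟩

open Finset in
/-- every tight coordinate is in any two element tight set -/
lemma aux_two {m : ℕ} {u : Fin m → Fin (m + 1) → ℝ} (hgen : InGeneralPosition u)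
    (a : Fin (m + 1) → ℝ)
    (Z : Fin m → Finset (Fin (m + 1))) (hZ : ∀ r, ∀ i ∈ Z r, AuxTight (u r) a i)
    (hc : ∀ r, 2 ≤ (Z r).card) (r : Fin m) (x : Fin (m + 1)) (hx : AuxTight (u r) a x) :
    x ∈ Z r := by
  classical
  obtain ⟨f, hf, hf2⟩ := aux_match hgen a Z hZ hc x
  obtain ⟨g, hg, hg2⟩ := aux_match hgen a Z hZ hc (f r)
  have hi : Function.Injective (Function.update f r x) := by
    intro s t hst
    by_cases h1 : s = r <;> by_cases h2 : t = r
    · rw [h1, h2]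
    · subst h1
      simp [h2] at hst
      exact absurd hst.symm (hf2 t).2
    · subst h2
      simp [h1] at hst
      exact absurd hst (hf2 s).2
    · simp [h1, h2] at hst
      exact hf hst
  have hav : ∀ s, Function.update f r x s ≠ f r := by
    intro s
    by_cases h1 : s = r
    · subst h1; simpa using (hf2 s).2.symm
    · simpa [h1] using hf.ne h1
  have := aux_A' hgen a univ (Function.update f r x) g hi.injOn hg.injOn
    ((aux_img _ hi _ hav).trans (aux_img _ hg _ (fun s => (hg2 s).2)).symm) ?_
    (fun s _ => hZ s _ (hg2 s).1) r (mem_univ _)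
  · simp at this
    rw [this]; exact (hg2 r).1
  · intro s _
    by_cases h1 : s = r
    · subst h1; simpa using hx
    · simpa [h1] using hZ s _ (hf2 s).1

open Finset in
lemma aux_le {m : ℕ} {u : Fin m → Fin (m + 1) → ℝ} (a : Fin (m + 1) → ℝ)
    (z : Fin m → Fin (m + 1)) (hz : ∀ r, AuxTight (u r) a (z r)) (i : Fin (m + 1))
    (f : Fin m → Fin (m + 1)) (hf : Function.Injective f) (hi : ∀ r, f r ≠ i) :
    ∑ r, u r (f r) ≤ ∑ r, (u r (z r) - a (z r)) + ∑ j, a j - a i := by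
  classical
  have e1 : ∑ r, a (f r) = ∑ j, a j - a i := by
    rw [← Finset.sum_image (f := a) (s := univ) hf.injOn, aux_img f hf i hi,
      ← Finset.add_sum_erase univ a (mem_univ i)]
    ring
  have e2 : ∑ r, (u r (f r) - a (f r)) ≤ ∑ r, (u r (z r) - a (z r)) :=
    Finset.sum_le_sum fun r _ => hz r _
  rw [Finset.sum_sub_distrib] at e2
  linarith

open Finset in
lemma aux_eq {m : ℕ} {u : Fin m → Fin (m + 1) → ℝ} (a : Fin (m + 1) → ℝ)
    (z : Fin m → Fin (m + 1)) (hz : ∀ r, AuxTight (u r) a (z r)) (i : Fin (m + 1))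
    (f : Fin m → Fin (m + 1)) (hf : Function.Injective f) (hi : ∀ r, f r ≠ i)
    (ht : ∀ r, AuxTight (u r) a (f r)) :
    ∑ r, u r (f r) = ∑ r, (u r (z r) - a (z r)) + ∑ j, a j - a i := by
  classical
  have e1 : ∑ r, a (f r) = ∑ j, a j - a i := by
    rw [← Finset.sum_image (f := a) (s := univ) hf.injOn, aux_img f hf i hi,
      ← Finset.add_sum_erase univ a (mem_univ i)]
    ring
  have e2 : ∑ r, (u r (f r) - a (f r)) = ∑ r, (u r (z r) - a (z r)) :=
    Finset.sum_congr rfl fun r _ => le_antisymm (hz r _) (ht r _)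
  rw [Finset.sum_sub_distrib] at e2
  linarith

open Finset in
lemma aux_exists {m : ℕ} (hm : 1 ≤ m) {u : Fin m → Fin (m + 1) → ℝ}
    (hgen : InGeneralPosition u) :
    ∃ (a : Fin (m + 1) → ℝ) (I : Set (Fin (m + 1))), I.Nonempty ∧ I ≠ Set.univ ∧
      ∀ r, ∃ i ∈ I, ∃ j ∉ I, AuxTight (u r) a i ∧ AuxTight (u r) a j := by
  classical
  let W : Equiv.Perm (Fin (m + 1)) → ℝ := fun π => ∑ r : Fin m, u r (π r.castSucc)
  have hex : ∀ i, ∃ π : Equiv.Perm (Fin (m + 1)), π (Fin.last m) = i ∧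
      ∀ ρ : Equiv.Perm (Fin (m + 1)), ρ (Fin.last m) = i → W ρ ≤ W π := by
    intro i
    obtain ⟨π, h1, h2⟩ := Finset.exists_max_image
      (univ.filter fun π : Equiv.Perm (Fin (m + 1)) => π (Fin.last m) = i) W
      ⟨Equiv.swap (Fin.last m) i, by simp⟩
    exact ⟨π, by simpa using h1, fun ρ hρ => h2 ρ (by simpa using hρ)⟩
  choose P hP1 hP2 using hex
  have main : ∀ r, ∃ i j, Equiv.Perm.sign (P j) = - Equiv.Perm.sign (P i) ∧
      AuxTight (u r) (fun i => - W (P i)) i ∧ AuxTight (u r) (fun i => - W (P i)) j := by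
    intro r
    obtain ⟨i, -, hi⟩ := Finset.exists_max_image univ (fun i => u r i + W (P i)) univ_nonempty
    set j := P i r.castSucc with hj
    set Q := P i * Equiv.swap r.castSucc (Fin.last m) with hQ
    have hQl : Q (Fin.last m) = j := by simp [hQ, hj]
    have hQr : Q r.castSucc = i := by simp [hQ, hP1]
    have hQs : ∀ s : Fin m, s ≠ r → Q s.castSucc = P i s.castSucc := by
      intro s hs
      simp only [hQ, Equiv.Perm.mul_apply]
      rw [Equiv.swap_apply_of_ne_of_ne]
      · simpa using hs
      · exact (Fin.castSucc_lt_last s).ne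
    have hW : W Q + u r j = W (P i) + u r i := by
      simp only [W]
      rw [← Finset.add_sum_erase univ _ (mem_univ r),
        ← Finset.add_sum_erase univ (fun s : Fin m => u s (P i s.castSucc)) (mem_univ r), hQr,
        Finset.sum_congr rfl (fun s hs => by rw [hQs s (mem_erase.1 hs).1])]
      ring
    have h1 := hP2 j Q hQl
    have h2 := hi j (mem_univ _)
    have h3 : W (P j) = W Q := by linarith
    have hinj : ∀ π : Equiv.Perm (Fin (m + 1)),
      Function.Injective (fun s : Fin m => π s.castSucc) := fun π =>
        π.injective.comp (Fin.castSucc_injective m)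
    have hav : ∀ π : Equiv.Perm (Fin (m + 1)), ∀ s : Fin m, π s.castSucc ≠ π (Fin.last m) :=
      fun π s => π.injective.ne (Fin.castSucc_lt_last s).ne
    have himg : ∀ π : Equiv.Perm (Fin (m + 1)), π (Fin.last m) = j →
        univ.image (fun s : Fin m => π s.castSucc) = univ.erase j := by
      intro π hπ
      exact aux_img _ (hinj π) _ (fun s => hπ ▸ hav π s)
    have h4 := aux_A hgen univ (fun s => P j s.castSucc) (fun s => Q s.castSucc)
      (hinj _).injOn (hinj _).injOn ((himg _ (hP1 j)).trans (himg _ hQl).symm) h3 (by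
        intro h hh hhim
        have hh' : Function.Injective h := by simpa using hh
        have hj' : ∀ s, h s ≠ j := by
          intro s hs
          have : h s ∈ univ.image h := mem_image_of_mem h (mem_univ s)
          rw [hhim, himg _ (hP1 j)] at this
          simp [hs] at this
        have hinj2 : Function.Injective (Fin.snoc h j : Fin (m + 1) → Fin (m + 1)) := by
          intro s t
          refine Fin.lastCases ?_ (fun s => ?_) s <;> refine Fin.lastCases ?_ (fun t => ?_) t
          · simp
          · simp only [Fin.snoc_last, Fin.snoc_castSucc]
            intro h; exact absurd h.symm (hj' t)
          · simp only [Fin.snoc_last, Fin.snoc_castSucc]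
            intro h; exact absurd h (hj' s)
          · simp only [Fin.snoc_castSucc]
            intro h; rw [hh' h]
        have := hP2 j (Equiv.ofBijective _ (Finite.injective_iff_bijective.1 hinj2)) (by simp)
        simpa [W] using this)
    have h5 : P j = Q := by
      ext s
      refine Fin.lastCases ?_ (fun s => ?_) s
      · rw [hP1, hQl]
      · rw [h4 s (mem_univ _)]
    refine ⟨i, j, ?_, ?_, ?_⟩
    · rw [h5, hQ, Equiv.Perm.sign_mul, Equiv.Perm.sign_swap (Fin.castSucc_lt_last r).ne]
      simp
    · intro k
      have := hi k (mem_univ _)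
      simp only at this ⊢
      linarith
    · intro k
      have := hi k (mem_univ _)
      simp only at this ⊢
      linarith
  have main2 : ∀ r, ∃ i ∈ {i | Equiv.Perm.sign (P i) = 1}, ∃ j ∉ {i | Equiv.Perm.sign (P i) = 1},
      AuxTight (u r) (fun i => - W (P i)) i ∧ AuxTight (u r) (fun i => - W (P i)) j := by
    intro r
    obtain ⟨i, j, hs, hi, hj⟩ := main r
    rcases Int.units_eq_one_or (Equiv.Perm.sign (P i)) with h | h
    · exact ⟨i, h, j, by simp [hs, h], hi, hj⟩
    · exact ⟨j, by simp [hs, h], i, by simp [h], hj, hi⟩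
  obtain ⟨i, hi, j, hj, -⟩ := main2 ⟨0, hm⟩
  exact ⟨_, _, ⟨i, hi⟩, fun h => hj (h ▸ Set.mem_univ j), main2⟩

open Finset in
lemma aux_unique {m : ℕ} {u : Fin m → Fin (m + 1) → ℝ}
    (hgen : InGeneralPosition u) (a b : Fin (m + 1) → ℝ) (I J : Set (Fin (m + 1)))
    (ha : ∀ r, ∃ i ∈ I, ∃ j ∉ I, AuxTight (u r) a i ∧ AuxTight (u r) a j)
    (hb : ∀ r, ∃ i ∈ J, ∃ j ∉ J, AuxTight (u r) b i ∧ AuxTight (u r) b j) :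
    (∀ x i, AuxTight x a i ↔ AuxTight x b i) ∧ (J = I ∨ J = Iᶜ) := by
  classical
  choose p hp p' hp' hpt hpt' using ha
  choose s hs s' hs' hst hst' using hb
  have hpne : ∀ r, p r ≠ p' r := fun r h => hp' r (h ▸ hp r)
  have hsne : ∀ r, s r ≠ s' r := fun r h => hs' r (h ▸ hs r)
  have hZ : ∀ r, ∀ i ∈ ({p r, p' r} : Finset (Fin (m + 1))), AuxTight (u r) a i := by
    intro r i hi
    simp only [mem_insert, mem_singleton] at hi
    rcases hi with rfl | rfl
    exacts [hpt r, hpt' r]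
  have hY : ∀ r, ∀ i ∈ ({s r, s' r} : Finset (Fin (m + 1))), AuxTight (u r) b i := by
    intro r i hi
    simp only [mem_insert, mem_singleton] at hi
    rcases hi with rfl | rfl
    exacts [hst r, hst' r]
  have hZc : ∀ r, 2 ≤ ({p r, p' r} : Finset (Fin (m + 1))).card := fun r => by
    rw [card_pair (hpne r)]
  have hYc : ∀ r, 2 ≤ ({s r, s' r} : Finset (Fin (m + 1))).card := fun r => by
    rw [card_pair (hsne r)]
  have hconst : ∃ c, ∀ i, a i = b i + c := by
    refine ⟨(∑ r, (u r (p r) - a (p r)) + ∑ j, a j) - (∑ r, (u r (s r) - b (s r)) + ∑ j, b j),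
      fun i => ?_⟩
    obtain ⟨f, hf, hf2⟩ := aux_match hgen a _ hZ hZc i
    obtain ⟨g, hg, hg2⟩ := aux_match hgen b _ hY hYc i
    have h1 := aux_le (u := u) a p hpt i g hg (fun r => (hg2 r).2)
    have h2 := aux_le (u := u) b s hst i f hf (fun r => (hf2 r).2)
    have h3 := aux_eq (u := u) a p hpt i f hf (fun r => (hf2 r).2) (fun r => hZ r _ (hf2 r).1)
    have h4 := aux_eq (u := u) b s hst i g hg (fun r => (hg2 r).2) (fun r => hY r _ (hg2 r).1)
    linarith
  obtain ⟨c, hc⟩ := hconst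
  have ht : ∀ x i, AuxTight x a i ↔ AuxTight x b i := by
    intro x i
    constructor <;> intro h k <;> have := h k <;> simp only [hc] at * <;> linarith
  refine ⟨ht, ?_⟩
  have hsp : ∀ r, ∀ i ∈ ({p r, p' r} : Finset (Fin (m + 1))), i = s r ∨ i = s' r := by
    intro r i hi
    have := aux_two hgen b _ hY hYc r i ((ht _ _).1 (hZ r i hi))
    simpa using this
  let K : Finset (Fin (m + 1)) := univ.filter fun i => (i ∈ I ↔ i ∈ J)
  let S : Finset (Fin m) := univ.filter fun r => p r ∈ K
  have hiff : ∀ r, p r ∈ K ↔ p' r ∈ K := by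
    intro r
    have h1 := hsp r (p r) (by simp)
    have h2 := hsp r (p' r) (by simp)
    have h3 := hpne r
    have a1 := hp r
    have a2 := hp' r
    have a3 := hs r
    have a4 := hs' r
    simp only [K, mem_filter, mem_univ, true_and]
    rcases h1 with h1 | h1 <;> rcases h2 with h2 | h2
    · exact absurd (h1.trans h2.symm) h3
    · rw [← h1] at a3; rw [← h2] at a4; tauto
    · rw [← h1] at a4; rw [← h2] at a3; tauto
    · exact absurd (h1.trans h2.symm) h3
  by_cases hK : K = ∅
  · right
    ext i
    have : i ∉ K := by simp [hK]
    simp only [K, mem_filter, mem_univ, true_and] at this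
    simp only [Set.mem_compl_iff]
    tauto
  by_cases hK' : Kᶜ = ∅
  · left
    ext i
    have : i ∉ Kᶜ := by simp [hK']
    simp only [K, mem_compl, mem_filter, mem_univ, true_and, not_not] at this
    exact this.symm
  exfalso
  have hcard : ∀ (L : Finset (Fin (m + 1))) (T : Finset (Fin m)), L ≠ ∅ →
      (∀ r ∈ T, p r ∈ L ∧ p' r ∈ L) → T.card + 1 ≤ L.card := by
    intro L T hL hT
    rcases T.eq_empty_or_nonempty with rfl | hTn
    · have := card_pos.2 (nonempty_iff_ne_empty.2 hL)
      simpa using this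
    refine (aux_C hgen a _ hZ hZc T hTn).trans (card_le_card ?_)
    intro x hx
    simp only [mem_biUnion, mem_insert, mem_singleton] at hx
    obtain ⟨r, hr, rfl | rfl⟩ := hx
    exacts [(hT r hr).1, (hT r hr).2]
  have c1 := hcard K S hK (fun r hr => by
    have : p r ∈ K := (mem_filter.1 hr).2
    exact ⟨this, (hiff r).1 this⟩)
  have c2 := hcard Kᶜ Sᶜ hK' (fun r hr => by
    have : p r ∉ K := fun h => (mem_compl.1 hr) (mem_filter.2 ⟨mem_univ _, h⟩)
    exact ⟨mem_compl.2 this, mem_compl.2 fun h => this ((hiff r).2 h)⟩)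
  have c3 := card_add_card_compl K
  have c4 := card_add_card_compl S
  simp only [Fintype.card_fin] at c3 c4
  omega

/-- if `n ≥ 2` and the points `u 0, …, u (n-2)` of `ℝ^n` are in general
position, then there is exactly one signed tropical hyperplane containing all of them. -/
theorem existsUnique_signedHyperplane {n : ℕ} (hn : 2 ≤ n)
    (u : Fin (n - 1) → Fin n → ℝ) (hgen : InGeneralPosition u) :
    ∃! H : Set (Fin n → ℝ), IsSignedHyperplane H ∧ ∀ r : Fin (n - 1), u r ∈ H := by
  obtain ⟨m, rfl⟩ : ∃ m, n = m + 1 := ⟨n - 1, by omega⟩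
  change Fin m → Fin (m + 1) → ℝ at u
  change InGeneralPosition (q := m) u at hgen
  obtain ⟨a, I, hI, hI', ha⟩ := aux_exists (by omega : 1 ≤ m) hgen
  refine ⟨_, ⟨⟨a, I, hI, hI', rfl⟩, fun r => (aux_mem _ _ _).2 (ha r)⟩, ?_⟩
  rintro H ⟨⟨b, J, hJ, hJ', rfl⟩, hb⟩
  obtain ⟨ht, hIJ⟩ := aux_unique hgen a b I J ha (fun r => (aux_mem _ _ _).1 (hb r))
  apply Set.ext
  intro x
  rw [aux_mem, aux_mem]
  simp only [ht]
  rcases hIJ with rfl | rfl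
  · rfl
  · constructor
    · rintro ⟨i, hi, j, hj, h1, h2⟩
      exact ⟨j, by simpa using hj, i, hi, h2, h1⟩
    · rintro ⟨i, hi, j, hj, h1, h2⟩
      exact ⟨j, hj, i, by simpa using hi, h2, h1⟩
end

section
/- Let u^1,…,u^p ∈ ℝ^n be in general position, and for each r ∈ {1,…,p} let 𝐮^r ∈ K^n be a vector all of whose coordinates are nonzero and positive elements of K with val(𝐮^r_i) = u^r_i for every i. Then every square submatrix of the n×p matrix over K whose columns are 𝐮^1,…,𝐮^p has nonzero determinant. -/
/-- A nonzero Hahn series is positive if its leading coefficient is positive. -/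
def HahnPos (x : HahnSeries ℝ ℝ) : Prop := x ≠ 0 ∧ 0 < x.coeff x.order

theorem aux_prod_order {ι : Type*} (s : Finset ι) (f : ι → HahnSeries ℝ ℝ) (hf : ∀ i, f i ≠ 0) :
    (∏ i ∈ s, f i) ≠ 0 ∧ (∏ i ∈ s, f i).order = ∑ i ∈ s, (f i).order := by
  classical
  induction s using Finset.induction_on with
  | empty => simp
  | insert a s ha ih =>
    rw [Finset.prod_insert ha, Finset.sum_insert ha, HahnSeries.order_mul (hf a) ih.1, ih.2]
    exact ⟨mul_ne_zero (hf a) ih.1, rfl⟩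

/-- if the points `u 1, …, u p` of `ℝ^n` are in general position and
`U r` is a vector of nonzero positive Hahn series with `val (U r i) = u r i`, then every
square submatrix of the `n × p` matrix over `K` with columns `U 1, …, U p` has nonzero
determinant. -/
theorem lift_general_position_det_ne_zero {n p : ℕ}
    (u : Fin p → Fin n → ℝ) (hgen : InGeneralPosition u)
    (U : Fin p → Fin n → HahnSeries ℝ ℝ)
    (hpos : ∀ r i, HahnPos (U r i))
    (hval : ∀ r i, -(U r i).order = u r i) :
    ∀ (k : ℕ) (ri : Fin k → Fin n) (ci : Fin k → Fin p),
      Function.Injective ri → Function.Injective ci →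
        Matrix.det (Matrix.of fun s t : Fin k => U (ci t) (ri s)) ≠ 0 := by
  intro k ri ci hri hci hdet
  have hns := hgen k ri ci hri hci
  obtain ⟨σ, hσ⟩ := Finite.exists_max
    (fun σ : Equiv.Perm (Fin k) => ∑ i, u (ci (σ i)) (ri i))
  have key : ∀ τ : Equiv.Perm (Fin k), (∏ i, U (ci (τ i)) (ri i)) ≠ 0 ∧
      (∏ i, U (ci (τ i)) (ri i)).order = -∑ i, u (ci (τ i)) (ri i) := by
    intro τ
    have h := aux_prod_order Finset.univ (fun i => U (ci (τ i)) (ri i)) (fun i => (hpos _ _).1)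
    refine ⟨h.1, h.2.trans ?_⟩
    rw [← Finset.sum_neg_distrib]
    exact Finset.sum_congr rfl fun i _ => by rw [← hval, neg_neg]
  have hlt : ∀ τ : Equiv.Perm (Fin k), τ ≠ σ →
      ∑ i, u (ci (τ i)) (ri i) < ∑ i, u (ci (σ i)) (ri i) := by
    intro τ hτ
    refine lt_of_le_of_ne (hσ τ) fun he => hns ⟨σ, τ, hτ.symm, ?_, ?_⟩
    · simpa using he.symm
    · intro ρ
      simpa using hσ ρ
  rw [← Matrix.det_transpose, Matrix.det_apply] at hdet
  simp only [Matrix.transpose_apply, Matrix.of_apply] at hdet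
  have hc := congrArg (fun x => x.coeff (∏ i, U (ci (σ i)) (ri i)).order) hdet
  simp only [HahnSeries.coeff_sum, HahnSeries.coeff_zero] at hc
  have hz : ∀ τ : Equiv.Perm (Fin k), τ ≠ σ →
      (∏ i, U (ci (τ i)) (ri i)).coeff (∏ i, U (ci (σ i)) (ri i)).order = 0 := by
    intro τ hτ
    apply HahnSeries.coeff_eq_zero_of_lt_order
    rw [(key τ).2, (key σ).2]
    exact neg_lt_neg (hlt τ hτ)
  rw [Finset.sum_eq_single σ] at hc
  · apply (key σ).1
    rw [← HahnSeries.coeff_order_eq_zero]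
    rcases Int.units_eq_one_or (Equiv.Perm.sign σ) with h | h
    · simpa [h] using hc
    · simpa [h, Units.smul_def] using hc
  · intro τ _ hτ
    have := hz τ hτ
    rcases Int.units_eq_one_or (Equiv.Perm.sign τ) with h | h
    · simpa [h] using this
    · simpa [h, Units.smul_def] using this
  · simp
end

section
/- Let n ≥ 2 and 1 ≤ p < n. Then the tropical polytope P generated by any points v^1,…,v^p ∈ ℝ^n is not pure. -/
/-- if `n ≥ 2` and `1 ≤ p < n`, then the tropical polytope generated by any
points `v 1, …, v p` of `ℝ^n` is not pure. -/
theorem not_isPure_of_few_generators {n p : ℕ} [NeZero n] (hn : 2 ≤ n)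
    (hp : 1 ≤ p) (hpn : p < n) (vs : Fin p → Fin n → ℝ) :
    ¬ IsPure (tropPoly vs) := by
  intro h
  unfold IsPure at h
  have hne : ({x | (x : Fin n → ℝ) ∈ tropPoly vs} : Set {x : Fin n → ℝ // x 0 = 0}).Nonempty := by
    haveI : Nonempty (Fin p) := ⟨⟨0, hp⟩⟩
    have key : ∀ i, ∃ r, ∀ s, vs s i ≤ vs r i := fun i => Finite.exists_max (fun r => vs r i)
    choose m hm using key
    refine ⟨⟨fun i => -(vs (m 0) 0) + vs (m i) i, by simp⟩, ?_⟩
    refine ⟨fun _ => -(vs (m 0) 0), fun i => ⟨⟨m i, rfl⟩, ?_⟩⟩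
    rintro _ ⟨s, rfl⟩
    have := hm i s
    simp only
    linarith
  rw [h] at hne
  obtain ⟨x, hx⟩ := closure_nonempty_iff.1 hne
  let f : ℝ → {x : Fin n → ℝ // x 0 = 0} :=
    fun t => ⟨fun i => x.1 i + t * ((i : ℕ) : ℝ), by simp [x.2]⟩
  have hf : Continuous f := by
    apply Continuous.subtype_mk
    fun_prop
  have hf0 : f 0 = x := by
    apply Subtype.ext
    funext i
    simp [f]
  have hmem : f ⁻¹' {x | (x : Fin n → ℝ) ∈ tropPoly vs} ∈ nhds (0 : ℝ) := by
    apply hf.continuousAt.preimage_mem_nhds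
    rw [hf0]
    exact mem_interior_iff_mem_nhds.1 hx
  refine infinite_of_mem_nhds (0 : ℝ) hmem ?_
  refine (Set.finite_range (fun q : Fin n × Fin n × Fin p =>
    (vs q.2.2 q.1 - vs q.2.2 q.2.1 - (x.1 q.1 - x.1 q.2.1)) /
      (((q.1 : ℕ) : ℝ) - ((q.2.1 : ℕ) : ℝ)))).subset ?_
  rintro t ⟨l, hl⟩
  choose r hr using fun i => (hl i).1
  obtain ⟨i, j, hij, hrij⟩ := Fintype.exists_ne_map_eq_of_card_lt r (by simpa using hpn)
  refine ⟨(i, j, r i), ?_⟩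
  have h1 := hr i
  have h2 := hr j
  rw [← hrij] at h2
  simp only [f] at h1 h2
  have hd : ((i : ℕ) : ℝ) - ((j : ℕ) : ℝ) ≠ 0 := by
    rw [sub_ne_zero]
    exact fun e => hij (Fin.ext (by exact_mod_cast e))
  simp only
  rw [div_eq_iff hd]
  linarith
end

section
/- Let n ≥ 2 and let P be the tropical polytope generated by v^1,…,v^p ∈ ℝ^n. Assume P is pure (so every extreme point of P has exactly one extremality type), fix γ^1,…,γ^p ∈ ℝ^n, and define the perturbed points ṽ^1,…,ṽ^p ∈ G^n and the tropical polytope P̃ ⊆ G^n as in the context. Then every extreme point of P̃ has exactly one extremality type: for every extreme point w of P̃ and all indices i ≠ j, it is not the case that w is an extreme point of P̃ of type i and also of type j. -/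
/-- The group `G = ℝ³` with componentwise addition and the lexicographic order. -/
abbrev G : Type := ℝ ×ₗ ℝ ×ₗ ℝ

/-- First coordinate projection `π₁ : G → ℝ`. -/
def pi1 (g : G) : ℝ := (ofLex g).1
/-- Second coordinate projection `π₂ : G → ℝ`. -/
def pi2 (g : G) : ℝ := (ofLex (ofLex g).2).1
/-- Third coordinate projection `π₃ : G → ℝ`. -/
def pi3 (g : G) : ℝ := (ofLex (ofLex g).2).2

/-- Build an element of `G` from its three real coordinates. -/
def mkG (a b c : ℝ) : G := toLex (a, toLex (b, c))

section Helpers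
variable {α : Type*} [LinearOrder α] [AddCommGroup α] [IsOrderedAddMonoid α]

theorem gen_mem {n p : ℕ} [NeZero n] (v : Fin p → Fin n → α) (r : Fin p) : v r ∈ tropPoly v := by
  have hne : (Finset.univ : Finset (Fin n)).Nonempty := ⟨0, Finset.mem_univ _⟩
  refine ⟨fun t => Finset.univ.inf' hne (fun k => v r k - v t k), fun i => ⟨⟨r, ?_⟩, ?_⟩⟩
  · simp
  · rintro _ ⟨t, rfl⟩
    have := Finset.inf'_le (s := Finset.univ) (fun k => v r k - v t k) (Finset.mem_univ i)
    exact le_sub_iff_add_le.mp this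

theorem exists_gen {n p : ℕ} {v : Fin p → Fin n → α} {x : Fin n → α} (hx : x ∈ tropPoly v)
    (i : Fin n) : ∃ t, v t ∈ sector x i := by
  obtain ⟨l, hl⟩ := hx
  obtain ⟨t, ht⟩ := (hl i).1
  refine ⟨t, fun k => ?_⟩
  have h2 : l t + v t k ≤ x k := (hl k).2 ⟨t, rfl⟩
  have ht' : l t + v t i = x i := ht
  rw [← ht']
  calc v t k - x k ≤ v t k - (l t + v t k) := sub_le_sub_left h2 _
    _ = v t i - (l t + v t i) := by abel

theorem shift_mem {n p : ℕ} {v : Fin p → Fin n → α} {x : Fin n → α} (hx : x ∈ tropPoly v)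
    (c : α) : (fun k => x k + c) ∈ tropPoly v := by
  obtain ⟨l, hl⟩ := hx
  refine ⟨fun t => l t + c, fun i => ⟨?_, ?_⟩⟩
  · obtain ⟨t, ht⟩ := (hl i).1
    refine ⟨t, ?_⟩
    have ht' : l t + v t i = x i := ht
    show l t + c + v t i = x i + c
    rw [← ht']; abel
  · rintro _ ⟨t, rfl⟩
    have h2 : l t + v t i ≤ x i := (hl i).2 ⟨t, rfl⟩
    show l t + c + v t i ≤ x i + c
    calc l t + c + v t i = l t + v t i + c := by abel
      _ ≤ _ := by gcongr

end Helpers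

theorem exists_type {n p : ℕ} [NeZero n] (v : Fin p → Fin n → ℝ) (r : Fin p) (i : Fin n) :
    ∃ s, v s ∈ sector (v r) i ∧ ExtremeOfType (tropPoly v) (v s) i := by
  classical
  obtain ⟨s, hs, hmin⟩ := Finset.exists_min_image
    (Finset.univ.filter fun s => v s ∈ sector (v r) i) (fun s => ∑ k, (v s k - v s i))
    ⟨r, by simp [sector]⟩
  simp only [Finset.mem_filter, Finset.mem_univ, true_and] at hs hmin
  refine ⟨s, hs, gen_mem v s, ?_⟩
  rintro x ⟨hx, hxs⟩
  obtain ⟨t, ht⟩ := exists_gen hx i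
  have hts : ∀ k, v t k - v t i ≤ v s k - v s i := fun k => by
    have h1 := ht k
    have h2 := hxs k
    linarith
  have htr : v t ∈ sector (v r) i := fun k => by
    have h1 := hts k
    have h2 := hs k
    linarith
  have heq := (Finset.sum_eq_sum_iff_of_le (fun k _ => hts k)).1
    (le_antisymm (Finset.sum_le_sum fun k _ => hts k) (hmin t htr))
  refine ⟨x i - v s i, funext fun k => ?_⟩
  have h1 := ht k
  have h2 := hxs k
  have h3 := heq k (Finset.mem_univ k)
  linarith

theorem pure_unique {n p : ℕ} [NeZero n] (v : Fin p → Fin n → ℝ) (hpure : IsPure (tropPoly v))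
    (r : Fin p) (i j : Fin n) (hij : i ≠ j) (hi : ExtremeOfType (tropPoly v) (v r) i)
    (hj : ExtremeOfType (tropPoly v) (v r) j) : False := by
  let P0 : Set {x : Fin n → ℝ // x 0 = 0} := {x | (x : Fin n → ℝ) ∈ tropPoly v}
  have hP : P0 = closure (interior P0) := hpure
  let a : {x : Fin n → ℝ // x 0 = 0} := ⟨fun k => v r k + (-(v r 0)), by simp⟩
  have ha : a ∈ closure (interior P0) := by
    rw [← hP]; exact shift_mem (gen_mem v r) _
  -- nearby points
  have key : ∀ m : Fin n, ∀ᶠ x : {x : Fin n → ℝ // x 0 = 0} in nhds a,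
      ∀ s, v s ∈ sector x.1 m → v s ∈ sector a.1 m := by
    intro m
    rw [Filter.eventually_all]
    intro s
    by_cases h : v s ∈ sector a.1 m
    · exact Filter.Eventually.of_forall fun _ _ => h
    · have hc : IsClosed {x : {x : Fin n → ℝ // x 0 = 0} | v s ∈ sector x.1 m} := by
        have he : {x : {x : Fin n → ℝ // x 0 = 0} | v s ∈ sector x.1 m} =
            ⋂ k, {x : {x : Fin n → ℝ // x 0 = 0} | v s k - x.1 k ≤ v s m - x.1 m} := by
          ext y
          rw [Set.mem_iInter]
          exact Iff.rfl
        rw [he]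
        refine isClosed_iInter fun k => isClosed_le ?_ ?_
        · exact continuous_const.sub ((continuous_apply k).comp continuous_subtype_val)
        · exact continuous_const.sub ((continuous_apply m).comp continuous_subtype_val)
      filter_upwards [hc.isOpen_compl.mem_nhds h] with x hx hx'
      exact absurd hx' hx
  obtain ⟨x, hx, hxi, hxj⟩ := ((mem_closure_iff_frequently.1 ha).and_eventually
    ((key i).and (key j))).exists
  have main : ∀ m m' : Fin n, m ≠ m' → ExtremeOfType (tropPoly v) (v r) m →
      (∀ s, v s ∈ sector x.1 m → v s ∈ sector a.1 m) →
      v r m' - x.1 m' < v r m - x.1 m := by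
    intro m m' hmm hm hk
    let f : ℝ → {x : Fin n → ℝ // x 0 = 0} := fun t =>
      ⟨fun k => x.1 k + (if k = m then t else 0) - (if 0 = m then t else 0), by
        simp [x.2]⟩
    have hf : Continuous f := by
      refine Continuous.subtype_mk (continuous_pi fun k => ?_) _
      split_ifs <;> fun_prop
    have hf0 : f 0 = x := by
      apply Subtype.ext; funext k; simp [f]
    have hev : ∀ᶠ t in nhds (0:ℝ), f t ∈ interior P0 :=
      hf.continuousAt.eventually_mem (by rw [hf0]; exact isOpen_interior.mem_nhds hx)
    obtain ⟨t, ht, htpos⟩ := ((hev.filter_mono nhdsWithin_le_nhds).and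
      (self_mem_nhdsWithin (s := Set.Ioi (0:ℝ)))).exists
    have htpos : 0 < t := htpos
    have htP0 : f t ∈ P0 := interior_subset ht
    have htP : (f t).1 ∈ tropPoly v := htP0
    obtain ⟨s, hs⟩ := exists_gen htP m
    have hs' : ∀ k, k ≠ m → v s k - x.1 k ≤ v s m - x.1 m - t := fun k hkm => by
      have := hs k
      simp only [f, hkm, if_true, if_false] at this
      linarith
    have hsx : v s ∈ sector x.1 m := fun k => by
      by_cases hkm : k = m
      · rw [hkm]
      · have := hs' k hkm; linarith
    have hsa := hk s hsx
    have hsr : v s ∈ sector (v r) m := fun k => by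
      have := hsa k
      simp only [a] at this
      linarith
    obtain ⟨c, hc⟩ := hm.2 _ ⟨gen_mem v s, hsr⟩
    have h1 := hs' m' hmm.symm
    rw [hc] at h1
    simp only at h1
    linarith
  have h1 := main i j hij hi hxi
  have h2 := main j i hij.symm hj hxj
  linarith

theorem mkG_sub (a b c a' b' c' : ℝ) : mkG a b c - mkG a' b' c' = mkG (a-a') (b-b') (c-c') := rfl
theorem mkG_add (a b c a' b' c' : ℝ) : mkG a b c + mkG a' b' c' = mkG (a+a') (b+b') (c+c') := rfl

theorem mkG_le {a b c a' b' c' : ℝ} (h : a ≤ a') (hb : b < b') : mkG a b c ≤ mkG a' b' c' := by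
  rcases h.lt_or_eq with h | h
  · exact Prod.Lex.toLex_le_toLex.2 (Or.inl h)
  · exact Prod.Lex.toLex_le_toLex.2 (Or.inr ⟨h, Prod.Lex.toLex_le_toLex.2 (Or.inl hb)⟩)

theorem type_descend {n p : ℕ} [NeZero n]
    (v : Fin p → Fin n → ℝ) (hpure : IsPure (tropPoly v))
    (γ : Fin p → Fin n → ℝ) (vt : Fin p → Fin n → G)
    (hvt1 : ∀ (r : Fin p) (k : Fin n), ExtremeOfType (tropPoly v) (v r) k →
      vt r k = mkG (v r k) 1 (γ r k))
    (hvt2 : ∀ (r : Fin p) (k : Fin n), ¬ ExtremeOfType (tropPoly v) (v r) k →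
      vt r k = mkG (v r k) 0 (γ r k)) (r : Fin p) (i k : Fin n) (hik : k ≠ i)
    (h : ∀ s, vt s ∈ sector (vt r) i → ∃ c, vt s = fun k => vt r k + c) :
    ExtremeOfType (tropPoly v) (v r) i := by
  by_contra hr
  obtain ⟨s, hsr, hs⟩ := exists_type v r i
  have hsi := hvt1 s i hs
  have hri := hvt2 r i hr
  have hsk : ∀ k, k ≠ i → vt s k = mkG (v s k) 0 (γ s k) := fun k hk =>
    hvt2 s k fun h' => pure_unique v hpure s k i hk h' hs
  have hrk : ∀ k, ∃ b, 0 ≤ b ∧ vt r k = mkG (v r k) b (γ r k) := fun k => by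
    by_cases h' : ExtremeOfType (tropPoly v) (v r) k
    · exact ⟨1, zero_le_one, hvt1 r k h'⟩
    · exact ⟨0, le_rfl, hvt2 r k h'⟩
  obtain ⟨c, hc⟩ := h s (fun k => by
    by_cases hk : k = i
    · rw [hk]
    · obtain ⟨b, hb, hbe⟩ := hrk k
      rw [hsk k hk, hbe, hsi, hri, mkG_sub, mkG_sub]
      exact mkG_le (hsr k) (by linarith))
  obtain ⟨b, hb, hbe⟩ := hrk k
  have e1 := congrFun hc i
  have e2 := congrFun hc k
  rw [hsi, hri] at e1
  rw [hsk k hik, hbe] at e2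
  have f1 : (1:ℝ) = 0 + pi2 c := congrArg pi2 e1
  have f2 : (0:ℝ) = b + pi2 c := congrArg pi2 e2
  linarith

/-- if the tropical polytope `P` is pure, then every extreme point of the
symbolically perturbed polytope `P̃ ⊆ G^n` has exactly one extremality type. -/
theorem perturbed_unique_extremality_type {n p : ℕ} [NeZero n] (hn : 2 ≤ n)
    (v : Fin p → Fin n → ℝ) (hpure : IsPure (tropPoly v))
    (γ : Fin p → Fin n → ℝ) (vt : Fin p → Fin n → G)
    (hvt1 : ∀ (r : Fin p) (k : Fin n), ExtremeOfType (tropPoly v) (v r) k →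
      vt r k = mkG (v r k) 1 (γ r k))
    (hvt2 : ∀ (r : Fin p) (k : Fin n), ¬ ExtremeOfType (tropPoly v) (v r) k →
      vt r k = mkG (v r k) 0 (γ r k)) :
    ∀ w : Fin n → G, IsExtremePt (tropPoly vt) w →
      ∀ i j : Fin n, i ≠ j →
        ¬(ExtremeOfType (tropPoly vt) w i ∧ ExtremeOfType (tropPoly vt) w j) := by
  rintro w - i j hij ⟨hi, hj⟩
  obtain ⟨r, hr⟩ := exists_gen hi.1 i
  obtain ⟨c, hc⟩ := hi.2 _ ⟨gen_mem vt r, hr⟩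
  have tr : ∀ m, ExtremeOfType (tropPoly vt) w m →
      ∀ s, vt s ∈ sector (vt r) m → ∃ c, vt s = fun k => vt r k + c := by
    intro m hm s hs
    have hsw : vt s ∈ sector w m := fun k => by
      have h1 := hs k
      rw [hc] at h1
      have h2 : vt s k - w k - c ≤ vt s m - w m - c := by
        simpa only [sub_sub] using h1
      exact (sub_le_sub_iff_right c).1 h2
    obtain ⟨d, hd⟩ := hm.2 _ ⟨gen_mem vt s, hsw⟩
    refine ⟨d - c, ?_⟩
    rw [hd, hc]
    funext k
    show w k + d = w k + c + (d - c)
    rw [add_assoc, add_sub_cancel]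
  exact pure_unique v hpure r i j hij
    (type_descend v hpure γ vt hvt1 hvt2 r i j hij.symm (tr i hi))
    (type_descend v hpure γ vt hvt1 hvt2 r j i hij (tr j hj))
end
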